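/- arXiv:1012.0393 — 4 statements merged into one kernel-verified Lean document; each statement's English description precedes it below -/
import Mathlib

section
/- For every x ∈ ℝ^d one has the lower bound (f ∗ 𝒞)(x) = ∫_{ℝ^d} f(y) 𝒞(x − y) dy ≥ (𝒞̄/2) · f(x), i.e. the convolution of f with the covariance function 𝒞 dominates (𝒞̄/2)·e^{−b|x|} pointwise. (Inequality (7), the main content of Lemma 6 of the paper.) -/
open MeasureTheory Real

/-- Inequality (7) of the paper (main content of Lemma 6): the convolution of
`f x = exp (-b ‖x‖)` (sup-norm on `ℝ^d`) with the covariance function `𝒞`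
dominates `(𝒞̄/2) · f` pointwise. -/
theorem convolution_lower_bound
    (d : ℕ) (hd : 1 ≤ d) (R : ℝ) (hR : 0 < R)
    (𝒞 : (Fin d → ℝ) → ℝ) (h𝒞cont : Continuous 𝒞)
    (h𝒞supp : Function.support 𝒞 ⊆ {x | ‖x‖ ≤ R})
    (h𝒞bar : 0 < ∫ x, 𝒞 x)
    (b : ℝ) (hb : 0 < b)
    (hb' : b ≤ (∫ x, 𝒞 x) / (2 * Real.exp 1 * R * ∫ x, |𝒞 x|))
    (f : (Fin d → ℝ) → ℝ) (hf : ∀ x, f x = Real.exp (-b * ‖x‖)) :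
    ∀ x, (∫ x, 𝒞 x) / 2 * f x ≤ ∫ y, f y * 𝒞 (x - y) := by
  have hcs : HasCompactSupport 𝒞 := by
    apply HasCompactSupport.of_support_subset_isCompact (isCompact_closedBall (0 : Fin d → ℝ) R)
    intro x hx
    simpa using h𝒞supp hx
  have hint : Integrable 𝒞 := h𝒞cont.integrable_of_hasCompactSupport hcs
  have hle : (∫ x, 𝒞 x) ≤ ∫ x, |𝒞 x| :=
    integral_mono hint hint.abs (fun x => le_abs_self _)
  set I := ∫ x, 𝒞 x with hI
  set N := ∫ x, |𝒞 x| with hN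
  have hNpos : 0 < N := lt_of_lt_of_le h𝒞bar hle
  have he : (2 : ℝ) ≤ Real.exp 1 := by
    have := Real.add_one_le_exp (1 : ℝ)
    linarith
  have hkey : b * (2 * Real.exp 1 * R * N) ≤ I := by
    rwa [le_div_iff₀ (by positivity)] at hb'
  have h4 : b * R * N * 4 ≤ I := by
    have : 0 ≤ b * R * N := by positivity
    nlinarith
  have hbR : b * R ≤ 1 := by
    by_contra hc
    push Not at hc
    nlinarith
  intro x
  have hfpos : ∀ y, 0 < f y := fun y => by rw [hf]; positivity
  have hfc : Continuous f := by
    have : f = fun x => Real.exp (-b * ‖x‖) := funext hf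
    rw [this]; fun_prop
  have hpt : ∀ y, f x * 𝒞 (x - y) - 2 * (b * R) * f x * |𝒞 (x - y)| ≤ f y * 𝒞 (x - y) := by
    intro y
    by_cases h0 : 𝒞 (x - y) = 0
    · simp [h0]
    have hn : ‖x - y‖ ≤ R := h𝒞supp h0
    have ht : |b * (‖x‖ - ‖y‖)| ≤ b * R := by
      rw [abs_mul, abs_of_pos hb]
      exact mul_le_mul_of_nonneg_left ((abs_norm_sub_norm_le x y).trans hn) hb.le
    have h1 := Real.abs_exp_sub_one_le (ht.trans hbR)
    have hfy : f y = f x * Real.exp (b * (‖x‖ - ‖y‖)) := by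
      rw [hf, hf, ← Real.exp_add]; congr 1; ring
    have h2 : |f x - f y| ≤ 2 * (b * R) * f x := by
      have : f x - f y = - (f x * (Real.exp (b * (‖x‖ - ‖y‖)) - 1)) := by rw [hfy]; ring
      rw [this, abs_neg, abs_mul, abs_of_pos (hfpos x)]
      have := hfpos x
      nlinarith
    have h3 : (f x - f y) * 𝒞 (x - y) ≤ 2 * (b * R) * f x * |𝒞 (x - y)| := by
      refine (le_abs_self _).trans ?_
      rw [abs_mul]
      exact mul_le_mul_of_nonneg_right h2 (abs_nonneg _)
    linarith
  have hi1 : Integrable (fun y => 𝒞 (x - y)) := hint.comp_sub_left x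
  have hi2 : Integrable (fun y => f y * 𝒞 (x - y)) := by
    refine hi1.bdd_mul (c := 1) hfc.aestronglyMeasurable (Filter.Eventually.of_forall fun y => ?_)
    rw [Real.norm_of_nonneg (hfpos y).le, hf, Real.exp_le_one_iff]
    have := mul_nonneg hb.le (norm_nonneg y)
    linarith
  have hm := integral_mono ((hi1.const_mul (f x)).sub (hi1.abs.const_mul (2 * (b * R) * f x))) hi2 hpt
  have e1 : ∫ y, 𝒞 (x - y) = I := integral_sub_left_eq_self 𝒞 volume x
  have e2 : ∫ y, |𝒞 (x - y)| = N := integral_sub_left_eq_self (fun z => |𝒞 z|) volume x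
  have e3 : ∫ y, (f x * 𝒞 (x - y) - 2 * (b * R) * f x * |𝒞 (x - y)|)
      = f x * I - 2 * (b * R) * f x * N := by
    rw [integral_sub (hi1.const_mul (f x)) (hi1.abs.const_mul (2 * (b * R) * f x)),
      integral_const_mul, integral_const_mul, e1, e2]
  have hm' := e3.symm.le.trans hm
  refine le_trans ?_ hm'
  have := hfpos x
  nlinarith
end

section
/- The double integral ∫_{ℝ^d} ∫_{ℝ^d} f(x) f(y) 𝒞(x − y) dx dy is bounded below by (𝒞̄/2) · ∫_{ℝ^d} f(x)² dx, and in particular is strictly positive. -/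
open MeasureTheory Real

lemma aux_int (d : ℕ) (c : ℝ) (hc : 0 < c) :
    Integrable (fun x : Fin d → ℝ => Real.exp (-c * ‖x‖)) := by
  have h1 : Integrable (fun x : Fin d → ℝ => (1 + ‖x‖) ^ (-((d : ℝ) + 1))) :=
    integrable_one_add_norm (by simp)
  have h2 := h1.const_mul (((d + 1).factorial : ℝ) / c ^ (d + 1) * Real.exp c)
  refine h2.mono' (by fun_prop) (Filter.Eventually.of_forall fun x => ?_)
  have hn := norm_nonneg x
  have h3 := Real.pow_div_factorial_le_exp (c * (1 + ‖x‖)) (by positivity) (d + 1)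
  rw [Real.norm_of_nonneg (Real.exp_pos _).le, Real.rpow_neg (by positivity)]
  have e1 : (1 + ‖x‖) ^ ((d : ℝ) + 1) = (1 + ‖x‖) ^ (d + 1) := by
    rw [← Real.rpow_natCast]; push_cast; rfl
  have e2 : Real.exp (-c * ‖x‖) = Real.exp c / Real.exp (c * (1 + ‖x‖)) := by
    rw [← Real.exp_sub]; congr 1; ring
  rw [e1, e2, div_le_iff₀ (Real.exp_pos _)]
  have hf : (0 : ℝ) < (d + 1).factorial := by positivity
  calc Real.exp c = (((d + 1).factorial : ℝ) / c ^ (d + 1) * Real.exp c * ((1 + ‖x‖) ^ (d + 1))⁻¹)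
        * ((c * (1 + ‖x‖)) ^ (d + 1) / (d + 1).factorial) := by
        have : (1 + ‖x‖) ≠ 0 := by positivity
        rw [mul_pow]; field_simp
    _ ≤ _ := by gcongr

/-- The double integral `∫∫ f(x) f(y) 𝒞(x−y) dx dy` is bounded below by
`(𝒞̄/2) ∫ f(x)² dx`, and in particular is strictly positive. -/
theorem double_integral_positive
    (d : ℕ) (hd : 1 ≤ d) (R : ℝ) (hR : 0 < R)
    (𝒞 : (Fin d → ℝ) → ℝ) (h𝒞cont : Continuous 𝒞)
    (h𝒞supp : Function.support 𝒞 ⊆ {x | ‖x‖ ≤ R})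
    (h𝒞bar : 0 < ∫ x, 𝒞 x)
    (b : ℝ) (hb : 0 < b)
    (hb' : b ≤ (∫ x, 𝒞 x) / (2 * Real.exp 1 * R * ∫ x, |𝒞 x|))
    (f : (Fin d → ℝ) → ℝ) (hf : ∀ x, f x = Real.exp (-b * ‖x‖)) :
    (∫ z, 𝒞 z) / 2 * (∫ x, (f x) ^ 2) ≤ (∫ x, ∫ y, f x * f y * 𝒞 (x - y))
    ∧ 0 < ∫ x, ∫ y, f x * f y * 𝒞 (x - y) := by
  have hcs : HasCompactSupport 𝒞 := by
    apply HasCompactSupport.of_support_subset_isCompact (isCompact_closedBall (0 : Fin d → ℝ) R)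
    intro x hx
    simpa using h𝒞supp hx
  have hCi : Integrable 𝒞 := h𝒞cont.integrable_of_hasCompactSupport hcs
  have hAi : Integrable (fun x => |𝒞 x|) := hCi.abs
  have hfe : f = fun x => Real.exp (-b * ‖x‖) := funext hf
  have hfc : Continuous f := by rw [hfe]; fun_prop
  have hfp : ∀ x, 0 < f x := fun x => by rw [hf]; exact Real.exp_pos _
  have hf2 : (fun x => f x ^ 2) = fun x => Real.exp (-(2 * b) * ‖x‖) := by
    funext x; rw [hf, ← Real.exp_nat_mul]; congr 1; push_cast; ring
  have hf2i : Integrable (fun x => f x ^ 2) := by rw [hf2]; exact aux_int d _ (by positivity)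
  have hf2pos : 0 < ∫ x, f x ^ 2 := by
    rw [hf2]; apply integral_exp_pos; exact aux_int d _ (by positivity)
  have hle : ∫ x, 𝒞 x ≤ ∫ x, |𝒞 x| := integral_mono hCi hAi fun x => le_abs_self _
  have hApos : 0 < ∫ x, |𝒞 x| := h𝒞bar.trans_le hle
  set A := ∫ x, |𝒞 x| with hA
  set B := ∫ x, 𝒞 x with hB
  have he := Real.exp_pos 1
  have hkey : b * R * Real.exp 1 * A ≤ B / 2 := by
    rw [le_div_iff₀ (by positivity)] at hb'
    linarith
  have hbR : b * R ≤ 1 := by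
    have h1 : (1 : ℝ) ≤ Real.exp 1 := by linarith [Real.add_one_le_exp (1 : ℝ)]
    have h2 : b * R * A ≤ 1 * A := by
      have : b * R * A * 1 ≤ b * R * A * Real.exp 1 := by gcongr
      nlinarith
    exact le_of_mul_le_mul_right h2 hApos
  -- pointwise estimate
  have hpt : ∀ x z, |f (x - z) * 𝒞 z - f x * 𝒞 z| ≤ f x * (b * R * Real.exp 1) * |𝒞 z| := by
    intro x z
    by_cases hz : 𝒞 z = 0
    · simp [hz]
    have hzR : ‖z‖ ≤ R := h𝒞supp hz
    rw [← sub_mul, abs_mul]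
    gcongr
    have e1 : f (x - z) = f x * Real.exp (b * (‖x‖ - ‖x - z‖)) := by
      rw [hf, hf, ← Real.exp_add]; congr 1; ring
    have ht : |b * (‖x‖ - ‖x - z‖)| ≤ b * R := by
      rw [abs_mul, abs_of_pos hb]
      gcongr
      calc |‖x‖ - ‖x - z‖| ≤ ‖x - (x - z)‖ := abs_norm_sub_norm_le _ _
        _ ≤ R := by simpa using hzR
    generalize b * (‖x‖ - ‖x - z‖) = t at *
    rw [e1, ← mul_sub_one, abs_mul, abs_of_pos (hfp x)]
    have := (hfp x).le
    gcongr
    obtain ⟨h1, h2⟩ := abs_le.1 ht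
    have h3 : Real.exp t ≤ Real.exp 1 := Real.exp_le_exp.2 (by linarith)
    have h4 : 1 ≤ Real.exp 1 := by linarith [Real.add_one_le_exp (1 : ℝ)]
    have h5 := Real.add_one_le_exp t
    have h6 := Real.add_one_le_exp (-t)
    have hbR0 : 0 < b * R := by positivity
    have h7 : Real.exp t * Real.exp (-t) = 1 := by rw [← Real.exp_add]; simp
    have h8 := Real.exp_pos t
    rw [abs_le]
    constructor
    · nlinarith
    · have : Real.exp t - 1 ≤ t * Real.exp t := by nlinarith
      have : t * Real.exp t ≤ b * R * Real.exp t := by gcongr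
      have : b * R * Real.exp t ≤ b * R * Real.exp 1 := by gcongr
      linarith
  have hin : ∀ x, ∫ y, f x * f y * 𝒞 (x - y) = f x * ∫ z, f (x - z) * 𝒞 z := by
    intro x
    rw [← integral_sub_left_eq_self (fun z => f (x - z) * 𝒞 z) volume x, ← integral_const_mul]
    congr 1; funext y; simp [mul_assoc]
  have hii : ∀ x, Integrable (fun z => f (x - z) * 𝒞 z) := fun x =>
    Continuous.integrable_of_hasCompactSupport (by fun_prop) (hcs.mul_left)
  have hdiff : ∀ x, |(∫ z, f (x - z) * 𝒞 z) - f x * B| ≤ f x * (B / 2) := by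
    intro x
    rw [hB, ← integral_const_mul, ← integral_sub (hii x) (hCi.const_mul _)]
    refine (abs_integral_le_integral_abs).trans ?_
    refine (integral_mono ((hii x).sub (hCi.const_mul _)).abs (hAi.const_mul _) (hpt x)).trans ?_
    rw [integral_const_mul, ← hA, ← hB, mul_assoc]
    have := (hfp x).le
    gcongr
  simp_rw [hin]
  have hmeas : AEStronglyMeasurable (fun x => f x * ∫ z, f (x - z) * 𝒞 z) volume := by
    refine hfc.aestronglyMeasurable.mul ?_
    have : StronglyMeasurable (Function.uncurry fun x z => f (x - z) * 𝒞 z) := by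
      apply Continuous.stronglyMeasurable
      unfold Function.uncurry
      fun_prop
    exact this.integral_prod_right.aestronglyMeasurable
  have hint : Integrable (fun x => f x * ∫ z, f (x - z) * 𝒞 z) := by
    refine (hf2i.const_mul (2 * B)).mono' hmeas (Filter.Eventually.of_forall fun x => ?_)
    have := hfp x
    obtain ⟨h1, h2⟩ := abs_le.1 (hdiff x)
    have hfB : 0 < f x * B := by positivity
    rw [Real.norm_eq_abs, abs_mul, abs_of_pos this, pow_two]
    have : |∫ z, f (x - z) * 𝒞 z| ≤ 2 * (f x * B) := by
      rw [abs_le]; constructor <;> linarith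
    nlinarith
  have hmain : B / 2 * (∫ x, (f x) ^ 2) ≤ ∫ x, f x * ∫ z, f (x - z) * 𝒞 z := by
    rw [← integral_const_mul]
    refine integral_mono (hf2i.const_mul _) hint fun x => ?_
    obtain ⟨h1, h2⟩ := abs_le.1 (hdiff x)
    have := hfp x
    show B / 2 * f x ^ 2 ≤ f x * ∫ z, f (x - z) * 𝒞 z
    nlinarith
  exact ⟨hmain, lt_of_lt_of_le (by positivity) hmain⟩
end

section
/- For every x ∈ ℝ^d with |x| ≤ 1/b one has ∫_{ℝ^d} f(y) 𝒞(x − y) dy ≥ 𝒞̄ / (2e); that is, on the cube Λ_{1/b} = {x : |x| < 1/b} the convolution f ∗ 𝒞 is bounded below by the positive constant 𝒞̄/(2e). -/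
open MeasureTheory Real

theorem aux_exp_sub {s t : ℝ} (hs : s ≤ 0) : Real.exp s - Real.exp t ≤ |s - t| := by
  have h1 := Real.add_one_le_exp (t - s)
  have h2 : Real.exp t = Real.exp s * Real.exp (t - s) := by
    rw [← Real.exp_add]; congr 1; ring
  have h3 : Real.exp s ≤ 1 := Real.exp_le_one_iff.mpr hs
  have h4 := Real.exp_pos s
  have h5 := le_abs_self (s - t)
  have h6 := abs_nonneg (s - t)
  calc Real.exp s - Real.exp t = Real.exp s * (1 - Real.exp (t - s)) := by rw [h2]; ring
    _ ≤ Real.exp s * |s - t| := mul_le_mul_of_nonneg_left (by linarith) h4.le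
    _ ≤ |s - t| := by nlinarith

theorem aux_exp_abs {s t : ℝ} (hs : s ≤ 0) (ht : t ≤ 0) :
    |Real.exp s - Real.exp t| ≤ |s - t| := by
  rw [abs_le]
  have h1 := aux_exp_sub (t := t) hs
  have h2 := aux_exp_sub (t := s) ht
  rw [abs_sub_comm] at h2
  constructor <;> linarith

/-- On the cube `Λ_{1/b}` the convolution `f ∗ 𝒞` is bounded below by the
positive constant `𝒞̄/(2e)`: for every `x` with `‖x‖ ≤ 1/b` one has
`∫ f(y) 𝒞(x−y) dy ≥ 𝒞̄/(2e)`. -/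
theorem convolution_lower_bound_on_cube
    (d : ℕ) (hd : 1 ≤ d) (R : ℝ) (hR : 0 < R)
    (𝒞 : (Fin d → ℝ) → ℝ) (h𝒞cont : Continuous 𝒞)
    (h𝒞supp : Function.support 𝒞 ⊆ {x | ‖x‖ ≤ R})
    (h𝒞bar : 0 < ∫ x, 𝒞 x)
    (b : ℝ) (hb : 0 < b)
    (hb' : b ≤ (∫ x, 𝒞 x) / (2 * Real.exp 1 * R * ∫ x, |𝒞 x|))
    (f : (Fin d → ℝ) → ℝ) (hf : ∀ x, f x = Real.exp (-b * ‖x‖)) :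
    ∀ x : Fin d → ℝ, ‖x‖ ≤ 1 / b →
      (∫ z, 𝒞 z) / (2 * Real.exp 1) ≤ ∫ y, f y * 𝒞 (x - y) := by
  intro x hx
  have hcs : HasCompactSupport 𝒞 := by
    refine HasCompactSupport.intro (isCompact_closedBall (0 : Fin d → ℝ) R) ?_
    intro z hz
    by_contra h
    exact hz (by simpa using h𝒞supp h)
  have hint : Integrable 𝒞 := h𝒞cont.integrable_of_hasCompactSupport hcs
  have hfc : Continuous f := by
    rw [funext hf]; fun_prop
  have hsub : ∫ y, f y * 𝒞 (x - y) = ∫ z, f (x - z) * 𝒞 z := by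
    rw [← integral_sub_left_eq_self (fun z => f (x - z) * 𝒞 z) volume x]
    simp
  have hint2 : Integrable (fun z => f (x - z) * 𝒞 z) := by
    refine Continuous.integrable_of_hasCompactSupport (by fun_prop) ?_
    exact hcs.mul_left
  have hpt : ∀ z, f x * 𝒞 z - b * R * |𝒞 z| ≤ f (x - z) * 𝒞 z := by
    intro z
    by_cases h0 : 𝒞 z = 0
    · simp [h0]
    have hz : ‖z‖ ≤ R := h𝒞supp h0
    have h1 : |f x - f (x - z)| ≤ b * R := by
      rw [hf, hf]
      refine (aux_exp_abs (by have := norm_nonneg x; nlinarith)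
        (by have := norm_nonneg (x - z); nlinarith)).trans ?_
      have h2 : -b * ‖x‖ - -b * ‖x - z‖ = (-b) * (‖x‖ - ‖x - z‖) := by ring
      rw [h2, abs_mul, abs_neg, abs_of_pos hb]
      refine mul_le_mul_of_nonneg_left ?_ hb.le
      have h3 := abs_norm_sub_norm_le x (x - z)
      rw [sub_sub_cancel] at h3
      exact h3.trans hz
    have h4 : (f x - f (x - z)) * 𝒞 z ≤ b * R * |𝒞 z| := by
      refine (le_abs_self _).trans ?_
      rw [abs_mul]
      exact mul_le_mul_of_nonneg_right h1 (abs_nonneg _)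
    linarith
  have hmono := integral_mono ((hint.const_mul (f x)).sub (hint.abs.const_mul (b * R))) hint2 hpt
  have heq : ∫ z, (f x * 𝒞 z - b * R * |𝒞 z|) = f x * (∫ z, 𝒞 z) - b * R * ∫ z, |𝒞 z| := by
    rw [integral_sub (hint.const_mul (f x)) (hint.abs.const_mul (b * R)),
      integral_const_mul, integral_const_mul]
  have hfx : 1 / Real.exp 1 ≤ f x := by
    rw [hf, one_div, ← Real.exp_neg]
    apply Real.exp_le_exp.mpr
    rw [le_div_iff₀ hb] at hx
    linarith
  have hL : 0 < ∫ z, |𝒞 z| :=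
    h𝒞bar.trans_le (integral_mono hint hint.abs (fun z => le_abs_self _))
  have he := Real.exp_pos 1
  have hbR : b * R * ∫ z, |𝒞 z| ≤ (∫ z, 𝒞 z) / (2 * Real.exp 1) := by
    rw [le_div_iff₀ (by positivity)] at hb' ⊢
    linarith
  have hfin := mul_le_mul_of_nonneg_right hfx h𝒞bar.le
  have hhalf : 1 / Real.exp 1 * (∫ z, 𝒞 z) = 2 * ((∫ z, 𝒞 z) / (2 * Real.exp 1)) := by
    field_simp
  rw [hsub]
  have hm2 : f x * (∫ z, 𝒞 z) - b * R * ∫ z, |𝒞 z| ≤ ∫ z, f (x - z) * 𝒞 z := heq ▸ hmono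
  linarith
end

section
/- Assume in addition that 𝒞(0) > 0. Then there exist a real number α > 0, a real number γ > 0, and a nonempty open set Γ ⊆ ℝ^d (namely Γ = {x : |x| < 1/b} and γ = α𝒞̄/(2e𝒞(0))) such that the weighted density g(x) = α f(x) satisfies: (i) ∫_{ℝ^d} ∫_{ℝ^d} g(x) g(y) 𝒞(x − y) dx dy = 𝒞(0), and (ii) for every x ∈ Γ, ∫_{ℝ^d} g(y) 𝒞(x − y) dy ≥ 𝒞(0) · γ. In other words, the finite measure μ(dx) = α f(x) dx fulfills condition (4) of the paper: ∫∫ 𝒞(x−y) μ(dx) μ(dy) = 𝒞(0) and μ ∗ 𝒞 ≥ 𝒞(0) γ χ_Γ. -/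
open MeasureTheory Real

/-- Condition (4) of the paper holds for the measure `μ(dx) = α f(x) dx`:
there exist `α > 0`, `γ > 0` and a nonempty open set `Γ ⊆ ℝ^d`
(namely `Γ = {x : ‖x‖ < 1/b}` and `γ = α𝒞̄/(2e𝒞(0))`) such that the weighted
density `g = α f` satisfies `∫∫ g(x) g(y) 𝒞(x−y) dx dy = 𝒞(0)` and
`∫ g(y) 𝒞(x−y) dy ≥ 𝒞(0) γ` for all `x ∈ Γ`. -/
theorem condition_four_holds
    (d : ℕ) (hd : 1 ≤ d) (R : ℝ) (hR : 0 < R)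
    (𝒞 : (Fin d → ℝ) → ℝ) (h𝒞cont : Continuous 𝒞)
    (h𝒞supp : Function.support 𝒞 ⊆ {x | ‖x‖ ≤ R})
    (h𝒞bar : 0 < ∫ x, 𝒞 x) (h𝒞zero : 0 < 𝒞 0)
    (b : ℝ) (hb : 0 < b)
    (hb' : b ≤ (∫ x, 𝒞 x) / (2 * Real.exp 1 * R * ∫ x, |𝒞 x|))
    (f : (Fin d → ℝ) → ℝ) (hf : ∀ x, f x = Real.exp (-b * ‖x‖)) :
    ∃ α : ℝ, 0 < α ∧
      ∃ γ : ℝ, 0 < γ ∧ γ = α * (∫ z, 𝒞 z) / (2 * Real.exp 1 * 𝒞 0) ∧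
        ∃ Γ : Set (Fin d → ℝ), Γ = {x | ‖x‖ < 1 / b} ∧ IsOpen Γ ∧ Γ.Nonempty ∧
          (∫ x, ∫ y, (α * f x) * (α * f y) * 𝒞 (x - y)) = 𝒞 0 ∧
          ∀ x ∈ Γ, 𝒞 0 * γ ≤ ∫ y, (α * f y) * 𝒞 (x - y) := by
  have hCint : Integrable 𝒞 := by
    apply h𝒞cont.integrable_of_hasCompactSupport
    apply HasCompactSupport.intro (isCompact_closedBall (0 : Fin d → ℝ) R)
    intro x hx
    by_contra h
    exact hx (by simpa using h𝒞supp h)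
  have hfc : Continuous f := by
    have : f = fun x => Real.exp (-b * ‖x‖) := funext hf
    rw [this]; fun_prop
  have hfpos : ∀ x, 0 < f x := fun x => by rw [hf]; exact Real.exp_pos _
  have hfint : Integrable f := by
    have hne : Nonempty (Fin d) := ⟨⟨0, hd⟩⟩
    have : f = fun x => (fun t : ℝ => Real.exp (-b * t)) ‖x‖ := funext hf
    rw [this, integrable_fun_norm_addHaar volume (f := fun t : ℝ => Real.exp (-b * t))]
    have h := integrableOn_rpow_mul_exp_neg_mul_rpow (p := 1) (s := ((d - 1 : ℕ) : ℝ)) (b := b)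
      (by have : (0 : ℝ) ≤ ((d - 1 : ℕ) : ℝ) := Nat.cast_nonneg _
          linarith) (by norm_num) hb
    simpa using h
  set K := ∫ x, 𝒞 x with hK
  set L := ∫ x, |𝒞 x| with hL
  have hKL : K ≤ L := integral_mono hCint hCint.abs (fun x => le_abs_self _)
  have hLpos : 0 < L := lt_of_lt_of_le h𝒞bar hKL
  have he : 0 < Real.exp 1 := Real.exp_pos 1
  have he1 : 1 ≤ Real.exp 1 := Real.one_le_exp (by norm_num)
  have hb2 : b * R * Real.exp 1 * L ≤ K / 2 := by
    rw [le_div_iff₀ (by positivity)] at hb'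
    linarith
  have hbR : b * R ≤ 1 := by
    by_contra h
    push Not at h
    have : 1 * L ≤ b * R * Real.exp 1 * L := by
      gcongr
      nlinarith
    linarith
  have hexp : Real.exp (b * R) - 1 ≤ b * R * Real.exp 1 := by
    have h1 : Real.exp (b * R) ≤ Real.exp 1 := Real.exp_le_exp.2 hbR
    have h2 : 1 - b * R ≤ Real.exp (-(b * R)) := by
      have := Real.add_one_le_exp (-(b * R)); linarith
    have h3 : Real.exp (-(b * R)) * Real.exp (b * R) = 1 := by
      rw [← Real.exp_add]; simp
    have h4 : 0 < b * R := by positivity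
    have h5 := Real.exp_pos (b * R)
    nlinarith
  have hdiff : ∀ x z, ‖z‖ ≤ R → |f (x - z) - f x| ≤ f x * (b * R * Real.exp 1) := by
    intro x z hz
    have hup : f (x - z) ≤ f x * Real.exp (b * R) := by
      rw [hf, hf, ← Real.exp_add, Real.exp_le_exp]
      have := norm_sub_norm_le x z
      nlinarith
    have hlo : f x * Real.exp (-(b * R)) ≤ f (x - z) := by
      rw [hf, hf, ← Real.exp_add, Real.exp_le_exp]
      have := norm_sub_le x z
      nlinarith
    have h2 : 1 - b * R ≤ Real.exp (-(b * R)) := by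
      have := Real.add_one_le_exp (-(b * R)); linarith
    have h4 : 0 < b * R := by positivity
    have hx := hfpos x
    rw [abs_le]
    constructor
    · have : f x * (1 - b * R * Real.exp 1) ≤ f x * Real.exp (-(b * R)) := by
        gcongr
        nlinarith
      linarith
    · have : f x * (Real.exp (b * R) - 1) ≤ f x * (b * R * Real.exp 1) := by gcongr
      linarith
  have hfle : ∀ x, f x ≤ 1 := fun x => by
    rw [hf, Real.exp_le_one_iff]
    have := mul_nonneg hb.le (norm_nonneg x)
    linarith
  have hint : ∀ x, Integrable (fun z => f (x - z) * 𝒞 z) := by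
    intro x
    refine hCint.mono (by fun_prop) (Filter.Eventually.of_forall fun z => ?_)
    rw [norm_mul, Real.norm_of_nonneg (hfpos _).le]
    exact mul_le_of_le_one_left (norm_nonneg _) (hfle _)
  have hconv : ∀ x, ∫ y, f y * 𝒞 (x - y) = ∫ z, f (x - z) * 𝒞 z := by
    intro x
    rw [← integral_sub_left_eq_self (fun y => f y * 𝒞 (x - y)) volume x]
    simp
  have hmain : ∀ x, |(∫ y, f y * 𝒞 (x - y)) - f x * K| ≤ f x * (K / 2) := by
    intro x
    rw [hconv, hK, ← integral_const_mul, ← integral_sub (hint x) (hCint.const_mul _)]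
    calc _ ≤ ∫ z, f x * (b * R * Real.exp 1) * |𝒞 z| := by
          rw [← Real.norm_eq_abs]
          apply norm_integral_le_of_norm_le (hCint.abs.const_mul _)
          refine Filter.Eventually.of_forall fun z => ?_
          rw [← sub_mul, norm_mul, Real.norm_eq_abs, Real.norm_eq_abs]
          by_cases hz : 𝒞 z = 0
          · simp [hz]
          · exact mul_le_mul_of_nonneg_right (hdiff x z (h𝒞supp hz)) (abs_nonneg _)
      _ = f x * (b * R * Real.exp 1 * L) := by rw [integral_const_mul]; ring
      _ ≤ _ := mul_le_mul_of_nonneg_left hb2 (hfpos x).le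
  have hlow : ∀ x, f x * (K / 2) ≤ ∫ y, f y * 𝒞 (x - y) := by
    intro x
    have := (abs_le.1 (hmain x)).1
    linarith
  have hhigh : ∀ x, |∫ y, f y * 𝒞 (x - y)| ≤ 2 * K := by
    intro x
    have h1 := (abs_le.1 (hmain x)).2
    have h2 := hlow x
    have h3 := hfle x
    have h4 := hfpos x
    rw [abs_le]
    constructor <;> nlinarith
  have hmeas : StronglyMeasurable (fun x => ∫ y, f y * 𝒞 (x - y)) := by
    apply StronglyMeasurable.integral_prod_right'
      (f := fun p : (Fin d → ℝ) × (Fin d → ℝ) => f p.2 * 𝒞 (p.1 - p.2))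
    apply Continuous.stronglyMeasurable
    fun_prop
  have hGint : Integrable (fun x => f x * ∫ y, f y * 𝒞 (x - y)) := by
    refine (hfint.mul_const (2 * K)).mono
      (hfc.aestronglyMeasurable.mul hmeas.aestronglyMeasurable)
      (Filter.Eventually.of_forall fun x => ?_)
    rw [norm_mul, norm_mul]
    gcongr
    rw [Real.norm_eq_abs, Real.norm_eq_abs]
    exact (hhigh x).trans (le_abs_self _)
  have hGpos : ∀ x, 0 < f x * ∫ y, f y * 𝒞 (x - y) := fun x =>
    mul_pos (hfpos x) (lt_of_lt_of_le (mul_pos (hfpos x) (by linarith)) (hlow x))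
  have hI : 0 < ∫ x, f x * ∫ y, f y * 𝒞 (x - y) := by
    rw [integral_pos_iff_support_of_nonneg (fun x => (hGpos x).le) hGint]
    have : Function.support (fun x => f x * ∫ y, f y * 𝒞 (x - y)) = Set.univ :=
      Set.eq_univ_of_forall fun x => (hGpos x).ne'
    rw [this]
    exact isOpen_univ.measure_pos _ Set.univ_nonempty
  set I := ∫ x, f x * ∫ y, f y * 𝒞 (x - y) with hIdef
  have hα : 0 < Real.sqrt (𝒞 0 / I) := Real.sqrt_pos.2 (div_pos h𝒞zero hI)
  refine ⟨Real.sqrt (𝒞 0 / I), hα, _, ?_, rfl, _, rfl, ?_, ⟨0, by simpa using hb⟩, ?_, ?_⟩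
  · positivity
  · exact isOpen_lt continuous_norm continuous_const
  · have h2 := Real.mul_self_sqrt (div_pos h𝒞zero hI).le
    set α := Real.sqrt (𝒞 0 / I)
    calc _ = ∫ x, (α * α) * (f x * ∫ y, f y * 𝒞 (x - y)) := by
          congr 1; ext x
          rw [← integral_const_mul, ← integral_const_mul]
          congr 1; ext y; ring
      _ = 𝒞 0 := by
          rw [integral_const_mul, h2, ← hIdef]
          field_simp
  · intro x hx
    set α := Real.sqrt (𝒞 0 / I)
    have hx' : b * ‖x‖ ≤ 1 := by
      have h : ‖x‖ < 1 / b := hx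
      rw [lt_div_iff₀ hb] at h
      linarith
    have hfx : (Real.exp 1)⁻¹ ≤ f x := by
      rw [hf, ← Real.exp_neg, Real.exp_le_exp]; linarith
    calc _ = α * ((Real.exp 1)⁻¹ * (K / 2)) := by field_simp
      _ ≤ α * ∫ y, f y * 𝒞 (x - y) := by
          apply mul_le_mul_of_nonneg_left _ hα.le
          refine le_trans ?_ (hlow x)
          exact mul_le_mul_of_nonneg_right hfx (by linarith)
      _ = _ := by
          rw [← integral_const_mul]
          congr 1; ext y; ring
end
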